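/- Let k ≥ 0 be an integer and G = (V,Σ,P,S) a reduced context-free grammar that is not LR(k). Then there exist rightmost derivations (1) S ⇒*_rm αAw ⇒_rm αβw and (2) S ⇒*_rm γBx ⇒_rm γδx = αβy such that FIRST_k(w) = FIRST_k(y), |γδ| ≥ |αβ|, and αAy ≠ γBx. -/

import Mathlib

/-!
Formalization framework for context-free grammars with distinguished
terminal type `T` and nonterminal type `N`.

* `CFG T N` : a context-free grammar `G = (V, Σ, P, S)` where
  `V = Symbol T N`, `Σ = T`, `N` the nonterminals, `P = G.rules`, `S = G.start`.
* `CFG.Derives` : the (unrestricted) derivation relation `⇒*`.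
* `CFG.RmDerives` : the rightmost derivation relation `⇒*_rm`.
* `CFG.LmStep` : one leftmost derivation step.
* `CFG.FirstK G k α` : the set `FIRST_k(α)`.
* `CFG.Reduced` : `G` is reduced.
* `CFG.IsLR G k` : `G` is an `LR(k)`-grammar.
* `CFG.ValidItem G k A β₁ β₂ u γ` : the `LR(k)`-item `[A → β₁·β₂, u]`
  is valid for the string `γ` (so that `γ = α ++ β₁` for some `α`).
-/

/-- A context-free grammar with terminals `T`, nonterminals `N`,
a set of productions and a start symbol. -/
structure CFG (T N : Type) where
  /-- the set `P` of productions `A → α` -/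
  rules : Set (N × List (Symbol T N))
  /-- the start symbol `S` -/
  start : N

namespace CFG

variable {T N : Type}

/-- One (unrestricted) derivation step `α ⇒ β`. -/
def Step (G : CFG T N) (α β : List (Symbol T N)) : Prop :=
  ∃ (A : N) (δ φ ψ : List (Symbol T N)),
    (A, δ) ∈ G.rules ∧ α = φ ++ [Symbol.nonterminal A] ++ ψ ∧ β = φ ++ δ ++ ψ

/-- The derivation relation `α ⇒* β`. -/
def Derives (G : CFG T N) : List (Symbol T N) → List (Symbol T N) → Prop :=
  Relation.ReflTransGen G.Step

/-- One rightmost derivation step `α ⇒_rm β`: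
the rewritten nonterminal is followed only by terminals. -/
def RmStep (G : CFG T N) (α β : List (Symbol T N)) : Prop :=
  ∃ (A : N) (δ φ : List (Symbol T N)) (w : List T),
    (A, δ) ∈ G.rules ∧ α = φ ++ [Symbol.nonterminal A] ++ w.map Symbol.terminal ∧
      β = φ ++ δ ++ w.map Symbol.terminal

/-- The rightmost derivation relation `α ⇒*_rm β`. -/
def RmDerives (G : CFG T N) : List (Symbol T N) → List (Symbol T N) → Prop :=
  Relation.ReflTransGen G.RmStep

/-- One leftmost derivation step `α ⇒_lm β`:
the rewritten nonterminal is preceded only by terminals. -/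
def LmStep (G : CFG T N) (α β : List (Symbol T N)) : Prop :=
  ∃ (A : N) (δ ψ : List (Symbol T N)) (w : List T),
    (A, δ) ∈ G.rules ∧ α = w.map Symbol.terminal ++ [Symbol.nonterminal A] ++ ψ ∧
      β = w.map Symbol.terminal ++ δ ++ ψ

/-- `FIRST_k(α) = {x ∈ Σ* ∣ α ⇒* xy, (y ∈ Σ⁺ ∧ |x| = k) ∨ (y = ε ∧ |x| ≤ k)}`. -/
def FirstK (G : CFG T N) (k : ℕ) (α : List (Symbol T N)) : Set (List T) :=
  { x | ∃ y : List T,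
      G.Derives α ((x ++ y).map Symbol.terminal) ∧
      ((y ≠ [] ∧ x.length = k) ∨ (y = [] ∧ x.length ≤ k)) }

/-- `G` is reduced: `P = ∅` or every symbol `X ∈ V` occurs in a derivation
`S ⇒* αXβ ⇒* w` of a terminal word. -/
def Reduced (G : CFG T N) : Prop :=
  G.rules = ∅ ∨ ∀ X : Symbol T N, ∃ (α β : List (Symbol T N)) (w : List T),
    G.Derives [Symbol.nonterminal G.start] (α ++ [X] ++ β) ∧
    G.Derives (α ++ [X] ++ β) (w.map Symbol.terminal)

/-- `G` is `LR(k)`: whenever `S ⇒*_rm αAw ⇒_rm αβw` and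
`S ⇒*_rm γBx ⇒_rm γδx = αβy` with `FIRST_k(w) = FIRST_k(y)`,
then `α = γ`, `A = B` and `x = y`. -/
def IsLR (G : CFG T N) (k : ℕ) : Prop :=
  ∀ (α β γ δ : List (Symbol T N)) (A B : N) (w x y : List T),
    G.RmDerives [Symbol.nonterminal G.start]
      (α ++ [Symbol.nonterminal A] ++ w.map Symbol.terminal) →
    (A, β) ∈ G.rules →
    G.RmDerives [Symbol.nonterminal G.start]
      (γ ++ [Symbol.nonterminal B] ++ x.map Symbol.terminal) →
    (B, δ) ∈ G.rules →
    γ ++ δ ++ x.map Symbol.terminal = α ++ β ++ y.map Symbol.terminal →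
    G.FirstK k (w.map Symbol.terminal) = G.FirstK k (y.map Symbol.terminal) →
    α = γ ∧ A = B ∧ x = y

/-- The `LR(k)`-item `[A → β₁·β₂, u]` is valid for `γ = α ++ β₁` if there is a
rightmost derivation `S ⇒*_rm αAw ⇒_rm αβ₁β₂w` with `u ∈ FIRST_k(β₂w)`,
where `u ∈ Σ^{≤k}`. -/
def ValidItem (G : CFG T N) (k : ℕ) (A : N) (β₁ β₂ : List (Symbol T N)) (u : List T)
    (γ : List (Symbol T N)) : Prop :=
  u.length ≤ k ∧ (A, β₁ ++ β₂) ∈ G.rules ∧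
  ∃ (α : List (Symbol T N)) (w : List T),
    γ = α ++ β₁ ∧
    G.RmDerives [Symbol.nonterminal G.start]
      (α ++ [Symbol.nonterminal A] ++ w.map Symbol.terminal) ∧
    u ∈ G.FirstK k (β₂ ++ w.map Symbol.terminal)

end CFG

/-!
If the overlap `γδx = αβy` of the two derivations has `|γδ| < |αβ|`, then `αβ = γδz` and `x = zy`
for a nonempty terminal word `z`. Exchanging the two derivations gives the overlap
`αβw = γδ(zw)`, and `FIRST_k(zy) = FIRST_k(zw)` because `FIRST_k(y) = FIRST_k(w)`. Since `z` is
nonempty, `w ≠ zw`, so the exchanged pair still violates the `LR(k)` condition.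
-/

theorem append_cons_inj_of_notMem_right {α : Type*} {l₁ l₂ r₁ r₂ : List α} {a b : α}
    (ha : a ∉ r₂) (hb : b ∉ r₁) :
    l₁ ++ a :: r₁ = l₂ ++ b :: r₂ ↔ l₁ = l₂ ∧ a = b ∧ r₁ = r₂ := by
  refine ⟨fun h => ?_, by rintro ⟨rfl, rfl, rfl⟩; rfl⟩
  -- If `l₁` and `l₂` had different lengths, one of `a`, `b` would lie in the other's tail.
  obtain ⟨_ | ⟨c, m⟩, h₁, h₂⟩ | ⟨_ | ⟨c, m⟩, h₁, h₂⟩ := List.append_eq_append_iff.1 h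
  all_goals simp_all

theorem take_append_congr_right {α : Type*} {k : ℕ} {u v : List α}
    (h : u.take k = v.take k) (z : List α) : (z ++ u).take k = (z ++ v).take k := by
  have h' : u.take (k - z.length) = v.take (k - z.length) := by
    simpa only [List.take_take, min_eq_left (Nat.sub_le k z.length)] using
      congrArg (List.take (k - z.length)) h
  rw [List.take_append, List.take_append, h']

namespace CFG

variable {T N : Type}

theorem map_terminal_injective :
    Function.Injective (List.map (Symbol.terminal : T → Symbol T N)) :=
  List.map_injective_iff.2 fun _ _ h => Symbol.terminal.inj h

theorem nonterminal_notMem_map_terminal (A : N) (w : List T) :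
    Symbol.nonterminal A ∉ w.map Symbol.terminal := by
  simp

theorem append_nonterminal_append_map_terminal_inj {α γ : List (Symbol T N)} {A B : N}
    {y x : List T} :
    α ++ [Symbol.nonterminal A] ++ y.map Symbol.terminal =
        γ ++ [Symbol.nonterminal B] ++ x.map Symbol.terminal ↔
      α = γ ∧ A = B ∧ y = x := by
  rw [List.append_assoc, List.append_assoc, List.singleton_append, List.singleton_append,
    append_cons_inj_of_notMem_right (nonterminal_notMem_map_terminal A x)
      (nonterminal_notMem_map_terminal B y),
    Symbol.nonterminal.injEq, map_terminal_injective.eq_iff]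

theorem exists_eq_append_of_append_map_terminal_eq {φ ψ : List (Symbol T N)} {x y : List T}
    (h : φ ++ x.map Symbol.terminal = ψ ++ y.map Symbol.terminal) (hlen : φ.length ≤ ψ.length) :
    ∃ z : List T, ψ = φ ++ z.map Symbol.terminal ∧ x = z ++ y := by
  obtain ⟨ζ, rfl⟩ : φ <+: ψ :=
    List.prefix_of_prefix_length_le (List.prefix_append _ _) ⟨_, h.symm⟩ hlen
  rw [List.append_assoc, List.append_cancel_left_eq] at h
  obtain ⟨z, y', rfl, rfl, hy⟩ := List.map_eq_append_iff.1 h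
  exact ⟨z, rfl, by rw [map_terminal_injective hy]⟩

theorem not_step_map_terminal (G : CFG T N) (w : List T) (β : List (Symbol T N)) :
    ¬ G.Step (w.map Symbol.terminal) β := by
  rintro ⟨A, δ, φ, ψ, -, hw, -⟩
  exact nonterminal_notMem_map_terminal A w (by simp [hw])

theorem derives_map_terminal_iff (G : CFG T N) {w : List T} {β : List (Symbol T N)} :
    G.Derives (w.map Symbol.terminal) β ↔ β = w.map Symbol.terminal :=
  Relation.reflTransGen_iff_eq (G.not_step_map_terminal w)

theorem firstK_map_terminal (G : CFG T N) (k : ℕ) (w : List T) :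
    G.FirstK k (w.map Symbol.terminal) = {w.take k} := by
  ext x
  simp only [FirstK, derives_map_terminal_iff, map_terminal_injective.eq_iff,
    Set.mem_ofPred_eq, Set.mem_singleton_iff]
  constructor
  · rintro ⟨y, rfl, ⟨-, rfl⟩ | ⟨rfl, hx⟩⟩
    · exact List.take_left.symm
    · rw [List.append_nil, List.take_of_length_le hx]
  · rintro rfl
    refine ⟨w.drop k, List.take_append_drop k w, ?_⟩
    obtain h | h := le_or_gt w.length k
    · exact Or.inr ⟨List.drop_eq_nil_of_le h, List.length_take_le k w⟩
    · exact Or.inl ⟨by simpa using h, List.length_take_of_le h.le⟩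

theorem firstK_map_terminal_eq_iff (G : CFG T N) {k : ℕ} {w y : List T} :
    G.FirstK k (w.map Symbol.terminal) = G.FirstK k (y.map Symbol.terminal) ↔
      w.take k = y.take k := by
  rw [firstK_map_terminal, firstK_map_terminal, Set.singleton_eq_singleton_iff]

/-- An `LR(k)` conflict: rightmost derivations `S ⇒*_rm αAw ⇒_rm αβw` and
`S ⇒*_rm γBx ⇒_rm γδx = αβy` with `FIRST_k(w) = FIRST_k(y)` whose last steps call for different
reductions, that is, which together violate the `LR(k)` condition. That the reductions differ is
encoded as `αAy ≠ γBx`, which is equivalent to `(α, A, y) ≠ (γ, B, x)`. -/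
structure IsLRConflict (G : CFG T N) (k : ℕ) (α β γ δ : List (Symbol T N)) (A B : N)
    (w x y : List T) : Prop where
  rmDerives_left : G.RmDerives [Symbol.nonterminal G.start]
    (α ++ [Symbol.nonterminal A] ++ w.map Symbol.terminal)
  rule_left : (A, β) ∈ G.rules
  rmDerives_right : G.RmDerives [Symbol.nonterminal G.start]
    (γ ++ [Symbol.nonterminal B] ++ x.map Symbol.terminal)
  rule_right : (B, δ) ∈ G.rules
  overlap : γ ++ δ ++ x.map Symbol.terminal = α ++ β ++ y.map Symbol.terminal
  firstK_eq : G.FirstK k (w.map Symbol.terminal) = G.FirstK k (y.map Symbol.terminal)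
  ne : α ++ [Symbol.nonterminal A] ++ y.map Symbol.terminal ≠
    γ ++ [Symbol.nonterminal B] ++ x.map Symbol.terminal

theorem not_isLR_iff_exists_isLRConflict {G : CFG T N} {k : ℕ} :
    ¬ G.IsLR k ↔ ∃ (α β γ δ : List (Symbol T N)) (A B : N) (w x y : List T),
      G.IsLRConflict k α β γ δ A B w x y := by
  constructor
  · intro hnlr
    simp only [IsLR, not_forall] at hnlr
    obtain ⟨α, β, γ, δ, A, B, w, x, y, hαA, hA, hγB, hB, hoverlap, hfirst, hne⟩ := hnlr
    refine ⟨α, β, γ, δ, A, B, w, x, y, hαA, hA, hγB, hB, hoverlap, hfirst, fun heq => hne ?_⟩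
    simpa only [eq_comm (a := x)] using append_nonterminal_append_map_terminal_inj.1 heq
  · rintro ⟨α, β, γ, δ, A, B, w, x, y, h⟩ hlr
    obtain ⟨rfl, rfl, rfl⟩ := hlr α β γ δ A B w x y h.rmDerives_left h.rule_left
      h.rmDerives_right h.rule_right h.overlap h.firstK_eq
    exact h.ne rfl

theorem IsLRConflict.exists_swap {G : CFG T N} {k : ℕ} {α β γ δ : List (Symbol T N)} {A B : N}
    {w x y : List T} (h : G.IsLRConflict k α β γ δ A B w x y)
    (hlen : (γ ++ δ).length < (α ++ β).length) :
    ∃ y' : List T, G.IsLRConflict k γ δ α β B A x w y' := by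
  obtain ⟨z, hz, rfl⟩ := exists_eq_append_of_append_map_terminal_eq h.overlap hlen.le
  have hz_ne : z ≠ [] := by
    rintro rfl
    simp [hz] at hlen
  have hfirst : (z ++ y).take k = (z ++ w).take k :=
    take_append_congr_right (G.firstK_map_terminal_eq_iff.1 h.firstK_eq).symm z
  refine ⟨z ++ w, h.rmDerives_right, h.rule_right, h.rmDerives_left, h.rule_left, ?_,
    G.firstK_map_terminal_eq_iff.2 hfirst, fun heq => hz_ne ?_⟩
  · rw [hz, List.map_append, List.append_assoc _ (z.map _)]
  · exact List.append_left_eq_self.1 (append_nonterminal_append_map_terminal_inj.1 heq).2.2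

theorem exists_isLRConflict_length_le {G : CFG T N} {k : ℕ} (hnlr : ¬ G.IsLR k) :
    ∃ (α β γ δ : List (Symbol T N)) (A B : N) (w x y : List T),
      G.IsLRConflict k α β γ δ A B w x y ∧ (α ++ β).length ≤ (γ ++ δ).length := by
  obtain ⟨α, β, γ, δ, A, B, w, x, y, h⟩ := not_isLR_iff_exists_isLRConflict.1 hnlr
  obtain hlen | hlen := le_or_gt (α ++ β).length (γ ++ δ).length
  · exact ⟨α, β, γ, δ, A, B, w, x, y, h, hlen⟩
  · obtain ⟨y', h'⟩ := h.exists_swap hlen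
    exact ⟨γ, δ, α, β, B, A, x, w, y', h', hlen.le⟩

end CFG

theorem statement_0_general {T N : Type} (G : CFG T N) (k : ℕ) (hnlr : ¬ G.IsLR k) :
    ∃ (α β γ δ : List (Symbol T N)) (A B : N) (w x y : List T),
      G.RmDerives [Symbol.nonterminal G.start]
        (α ++ [Symbol.nonterminal A] ++ w.map Symbol.terminal) ∧
      (A, β) ∈ G.rules ∧
      G.RmDerives [Symbol.nonterminal G.start]
        (γ ++ [Symbol.nonterminal B] ++ x.map Symbol.terminal) ∧
      (B, δ) ∈ G.rules ∧
      γ ++ δ ++ x.map Symbol.terminal = α ++ β ++ y.map Symbol.terminal ∧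
      G.FirstK k (w.map Symbol.terminal) = G.FirstK k (y.map Symbol.terminal) ∧
      (α ++ β).length ≤ (γ ++ δ).length ∧
      α ++ [Symbol.nonterminal A] ++ y.map Symbol.terminal ≠
        γ ++ [Symbol.nonterminal B] ++ x.map Symbol.terminal := by
  obtain ⟨α, β, γ, δ, A, B, w, x, y, h, hlen⟩ := CFG.exists_isLRConflict_length_le hnlr
  exact ⟨α, β, γ, δ, A, B, w, x, y, h.rmDerives_left, h.rule_left, h.rmDerives_right,
    h.rule_right, h.overlap, h.firstK_eq, hlen, h.ne⟩

/-- **Lemma 1.** If the reduced cfg `G` is not `LR(k)`, then there exist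
rightmost derivations `S ⇒*_rm αAw ⇒_rm αβw` and `S ⇒*_rm γBx ⇒_rm γδx = αβy`
with `FIRST_k(w) = FIRST_k(y)`, `|γδ| ≥ |αβ|` and `αAy ≠ γBx`. -/
theorem statement_0 {T N : Type} (G : CFG T N) (k : ℕ)
    (hred : G.Reduced) (hnlr : ¬ G.IsLR k) :
    ∃ (α β γ δ : List (Symbol T N)) (A B : N) (w x y : List T),
      G.RmDerives [Symbol.nonterminal G.start]
        (α ++ [Symbol.nonterminal A] ++ w.map Symbol.terminal) ∧
      (A, β) ∈ G.rules ∧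
      G.RmDerives [Symbol.nonterminal G.start]
        (γ ++ [Symbol.nonterminal B] ++ x.map Symbol.terminal) ∧
      (B, δ) ∈ G.rules ∧
      γ ++ δ ++ x.map Symbol.terminal = α ++ β ++ y.map Symbol.terminal ∧
      G.FirstK k (w.map Symbol.terminal) = G.FirstK k (y.map Symbol.terminal) ∧
      (α ++ β).length ≤ (γ ++ δ).length ∧
      α ++ [Symbol.nonterminal A] ++ y.map Symbol.terminal ≠
        γ ++ [Symbol.nonterminal B] ++ x.map Symbol.terminal :=
  statement_0_general G k hnlr
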